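/- Let m, n be natural numbers with 0 ≤ m ≤ n, and let x > 1 be real. Then d^m/dx^m [P_n(x)·log(x−1)] = P_n^{(m)}(x)·log(x−1) − (ψ(n+m+1) − 2ψ(n+1) + ψ(n−m+1))·P_n^{(m)}(x) − (−1)^{n+m}·2^{−m} Σ_{k=0}^{n−m} (−1)^k·((k+n+m)!·ψ(k+m+1))/(k!·(k+m)!·(n−m−k)!) · ((x+1)/2)^k + (−1)^n·((n+m)!/(n−m)!)·(x−1)^{−m} Σ_{k=0}^{n} (−1)^k·((k+n)!·ψ(k+m+1))/(k!·(k+m)!·(n−k)!) · ((x+1)/2)^k. -/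

import Mathlib

open Finset Real

/-- The Legendre polynomial `P_n`, via its explicit expansion
`P_n(x) = ∑_{k=0}^{n} ((n+k)!/((k!)² (n−k)!)) ((x−1)/2)^k`. -/
noncomputable def legendreP (n : ℕ) (x : ℝ) : ℝ :=
  ∑ k ∈ Finset.range (n + 1),
    (((n + k).factorial : ℝ) / (((k.factorial : ℝ)) ^ 2 * ((n - k).factorial : ℝ))) *
      ((x - 1) / 2) ^ k

/-- The harmonic number `H_i = ∑_{r=1}^{i} 1/r`. -/
noncomputable def harm (i : ℕ) : ℝ := ∑ r ∈ Finset.range i, (1 : ℝ) / (r + 1)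

/-- The digamma function at a positive integer `j`: `ψ(j) = H_{j−1} − γ`. -/
noncomputable def psi (j : ℕ) : ℝ := harm (j - 1) - Real.eulerMascheroniConstant

/-!
The logarithm is a derivative in the exponent, `y ^ s * log y = ∂/∂s y ^ s`, so the `m`-th
derivative of `(x - 1) ^ k * log (x - 1)` involves the falling factorial `(s)_m` and its
`s`-derivative at `s = k`. Likewise `ψ` is the logarithmic derivative of `Γ`, so the two alternating
sums are parameter derivatives of sums of factorial ratios. Put `t = (x - 1) / 2`. Rewriting a power
of `(x + 1) / 2 = 1 + t` in powers of `t` turns the inner sums into iterated forward differences of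
factorial ratios, which have closed forms in terms of falling factorials and their derivatives. The
identity then holds coefficientwise in `t`.
-/

/-- The coefficient of `((x - 1) / 2) ^ k` in the Legendre polynomial `P_n(x)`, for `k ≤ n`. It is
not zero for `k > n`, where `n - k` truncates. -/
noncomputable def legendreCoeff (n k : ℕ) : ℝ :=
  ((n + k).factorial : ℝ) / ((k.factorial : ℝ) ^ 2 * ((n - k).factorial : ℝ))

lemma legendreCoeff_mul_factorial {n k : ℕ} (hk : k ≤ n) :
    legendreCoeff n k * (k.factorial * n.factorial) = n.choose k * (n + k).factorial := by
  rw [legendreCoeff, Nat.cast_choose ℝ hk]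
  field_simp

lemma psi_succ {j : ℕ} (hj : j ≠ 0) : psi (j + 1) = psi j + 1 / j := by
  obtain ⟨i, rfl⟩ := Nat.exists_eq_succ_of_ne_zero hj
  simp only [psi, harm, Nat.succ_eq_add_one, Nat.add_sub_cancel, Finset.sum_range_succ]
  push_cast
  ring

section DescPochhammer

lemma descPochhammer_eval_natCast_of_le {m k : ℕ} (hmk : m ≤ k) :
    (descPochhammer ℝ m).eval (k : ℝ) = k.factorial / (k - m).factorial := by
  rw [descPochhammer_eval_eq_descFactorial, ← Nat.factorial_mul_descFactorial hmk, Nat.cast_mul]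
  field_simp

lemma derivative_descPochhammer_succ_eval {R : Type*} [CommRing R] (m : ℕ) (s : R) :
    (descPochhammer R (m + 1)).derivative.eval s =
      (descPochhammer R m).derivative.eval s * (s - m) + (descPochhammer R m).eval s := by
  simp [descPochhammer_succ_right]

lemma derivative_descPochhammer_eval_natCast_of_le {m k : ℕ} (hmk : m ≤ k) :
    (descPochhammer ℝ m).derivative.eval (k : ℝ) =
      (descPochhammer ℝ m).eval (k : ℝ) * (psi (k + 1) - psi (k - m + 1)) := by
  induction m with
  | zero => simp
  | succ m ih =>
    obtain ⟨r, rfl⟩ := Nat.exists_eq_add_of_le hmk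
    have hpsi : psi (m + 1 + r - m + 1) = psi (m + 1 + r - (m + 1) + 1) + 1 / (r + 1) := by
      rw [show m + 1 + r - m = r + 1 by lia, Nat.add_sub_cancel_left, psi_succ r.succ_ne_zero]
      push_cast
      rfl
    have hr : (r : ℝ) + 1 ≠ 0 := by positivity
    rw [derivative_descPochhammer_succ_eval, descPochhammer_succ_eval, ih (by lia), hpsi]
    push_cast
    field_simp
    ring

lemma derivative_descPochhammer_eval_natCast_of_lt {R : Type*} [CommRing R] {k m : ℕ}
    (hkm : k < m) :
    (descPochhammer R m).derivative.eval (k : R) =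
      (-1) ^ (m - k - 1) * k.factorial * (m - k - 1).factorial := by
  induction m, hkm using Nat.le_induction with
  | base =>
    simp [derivative_descPochhammer_succ_eval, descPochhammer_eval_eq_descFactorial,
      Nat.descFactorial_self]
  | succ m hkm ih =>
    obtain ⟨q, rfl⟩ := Nat.exists_eq_add_of_le hkm
    rw [derivative_descPochhammer_succ_eval, ih, descPochhammer_eval_coe_nat_of_lt (by lia),
      show k.succ + q + 1 - k - 1 = q + 1 by lia, show k.succ + q - k - 1 = q by lia,
      Nat.factorial_succ]
    push_cast
    ring

variable {m n k : ℕ}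

-- Writing `(s)_m` for the falling factorial,
-- `Γ(k+1+s) (n-m+s)_{n-k} = Γ(n-m+1+s) (k+s)_m`; this is its value at `s = 0`, and the next lemma
-- its derivative there.
lemma factorial_mul_descPochhammer_eval_sub (hmn : m ≤ n) (hkn : k ≤ n) :
    (k.factorial : ℝ) * (descPochhammer ℝ (n - k)).eval ((n - m : ℕ) : ℝ) =
      (n - m).factorial * (descPochhammer ℝ m).eval (k : ℝ) := by
  rcases le_or_gt m k with hmk | hkm
  · rw [descPochhammer_eval_natCast_of_le hmk,
      descPochhammer_eval_natCast_of_le (show n - k ≤ n - m by lia),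
      show n - m - (n - k) = k - m by lia]
    ring
  · rw [descPochhammer_eval_coe_nat_of_lt hkm, descPochhammer_eval_coe_nat_of_lt (by lia),
      mul_zero, mul_zero]

lemma factorial_mul_derivative_descPochhammer_eval_sub (hmn : m ≤ n) (hkn : k ≤ n) :
    (k.factorial : ℝ) * (descPochhammer ℝ (n - k)).derivative.eval ((n - m : ℕ) : ℝ) =
      (n - m).factorial * ((descPochhammer ℝ m).derivative.eval (k : ℝ) +
        (descPochhammer ℝ m).eval (k : ℝ) * (psi (n - m + 1) - psi (k + 1))) := by
  rcases le_or_gt m k with hmk | hkm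
  · rw [derivative_descPochhammer_eval_natCast_of_le hmk,
      derivative_descPochhammer_eval_natCast_of_le (show n - k ≤ n - m by lia),
      show n - m - (n - k) = k - m by lia]
    linear_combination
      (psi (n - m + 1) - psi (k - m + 1)) * factorial_mul_descPochhammer_eval_sub hmn hkn
  · rw [derivative_descPochhammer_eval_natCast_of_lt hkm,
      derivative_descPochhammer_eval_natCast_of_lt (show n - m < n - k by lia),
      descPochhammer_eval_coe_nat_of_lt hkm, show n - k - (n - m) - 1 = m - k - 1 by lia]
    ring

lemma legendreCoeff_mul_descPochhammer_eval (hmk : m ≤ k) (hkn : k ≤ n) :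
    legendreCoeff n k * (descPochhammer ℝ m).eval (k : ℝ) * ((n - m).factorial * n.factorial) =
      (n - m).choose (k - m) * (n + k).factorial * (descPochhammer ℝ (n - k)).eval (n : ℝ) := by
  rw [legendreCoeff, Nat.cast_choose ℝ (Nat.sub_le_sub_right hkn m),
    descPochhammer_eval_natCast_of_le hmk, descPochhammer_eval_natCast_of_le (n.sub_le k),
    Nat.sub_sub_self hkn, Nat.sub_sub_sub_cancel_right hmk]
  field_simp

end DescPochhammer

section Derivatives

-- The formula is the `s`-derivative of `d^m/dy^m y^s = (s)_m y^(s-m)`.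
lemma iteratedDeriv_rpow_mul_log (s : ℝ) (m : ℕ) {y : ℝ} (hy : 0 < y) :
    iteratedDeriv m (fun z => z ^ s * Real.log z) y =
      y ^ (s - m) * ((descPochhammer ℝ m).eval s * Real.log y +
        (descPochhammer ℝ m).derivative.eval s) := by
  induction m generalizing y with
  | zero => simp
  | succ m ih =>
    have hlocal : iteratedDeriv m (fun z => z ^ s * Real.log z) =ᶠ[nhds y] fun z =>
        z ^ (s - m) * ((descPochhammer ℝ m).eval s * Real.log z +
          (descPochhammer ℝ m).derivative.eval s) := by
      filter_upwards [lt_mem_nhds hy] with z hz using ih hz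
    have hderiv := (Real.hasDerivAt_rpow_const (p := s - m) (Or.inl hy.ne')).fun_mul
      (((Real.hasDerivAt_log hy.ne').const_mul ((descPochhammer ℝ m).eval s)).add_const
        ((descPochhammer ℝ m).derivative.eval s))
    have hpow : y ^ (s - m) = y ^ (s - m - 1) * y := by
      rw [Real.rpow_sub_one hy.ne', div_mul_cancel₀ _ hy.ne']
    rw [iteratedDeriv_succ, hlocal.deriv_eq, hderiv.deriv,
      descPochhammer_succ_eval, derivative_descPochhammer_succ_eval, hpow, Nat.cast_succ,
      ← sub_sub]
    field_simp
    ring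

variable {x : ℝ} (n m : ℕ)

lemma legendreP_eq_sum_rpow (x : ℝ) :
    legendreP n x = ∑ k ∈ range (n + 1), legendreCoeff n k / 2 ^ k * (x - 1) ^ (k : ℝ) := by
  refine Finset.sum_congr rfl fun k _ => ?_
  rw [legendreCoeff, Real.rpow_natCast, div_pow]
  ring

lemma rpow_natCast_sub_natCast_eq_mul_div_two_pow {y : ℝ} (hy : y ≠ 0) (k : ℕ) :
    y ^ ((k : ℝ) - m) = 2 ^ k * (y ^ (-(m : ℤ)) * (y / 2) ^ k) := by
  rw [Real.rpow_sub_natCast hy, Real.rpow_natCast, zpow_neg, zpow_natCast, div_pow]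
  field_simp

lemma iteratedDeriv_legendreP (hx : x ≠ 1) :
    iteratedDeriv m (legendreP n) x = (x - 1) ^ (-(m : ℤ)) * ∑ k ∈ range (n + 1),
      legendreCoeff n k * ((x - 1) / 2) ^ k * (descPochhammer ℝ m).eval (k : ℝ) := by
  have hx' : x - 1 ≠ 0 := sub_ne_zero.2 hx
  rw [funext (legendreP_eq_sum_rpow n),
    iteratedDeriv_fun_sum fun k _ => by fun_prop (disch := simpa), mul_sum]
  refine Finset.sum_congr rfl fun k _ => ?_
  rw [iteratedDeriv_const_mul_field, iteratedDeriv_comp_sub_const m (fun z : ℝ => z ^ (k : ℝ)),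
    iteratedDeriv_eq_iterate]
  beta_reduce
  rw [Real.iter_deriv_rpow_const, rpow_natCast_sub_natCast_eq_mul_div_two_pow m hx']
  field_simp

lemma iteratedDeriv_legendreP_mul_log (hx : 1 < x) :
    iteratedDeriv m (fun y => legendreP n y * Real.log (y - 1)) x =
      (x - 1) ^ (-(m : ℤ)) * ∑ k ∈ range (n + 1), legendreCoeff n k * ((x - 1) / 2) ^ k *
        ((descPochhammer ℝ m).eval (k : ℝ) * Real.log (x - 1) +
          (descPochhammer ℝ m).derivative.eval (k : ℝ)) := by
  have hx' : x - 1 ≠ 0 := (sub_pos.2 hx).ne'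
  simp only [legendreP_eq_sum_rpow, sum_mul, mul_assoc (_ / _)]
  rw [iteratedDeriv_fun_sum fun k _ => by fun_prop (disch := simpa), mul_sum]
  refine Finset.sum_congr rfl fun k _ => ?_
  rw [iteratedDeriv_const_mul_field,
    iteratedDeriv_comp_sub_const m (fun z : ℝ => z ^ (k : ℝ) * Real.log z)]
  beta_reduce
  rw [iteratedDeriv_rpow_mul_log _ _ (sub_pos.2 hx),
    rpow_natCast_sub_natCast_eq_mul_div_two_pow m hx']
  field_simp

end Derivatives

section ForwardDifference

open fwdDiff

variable {M G R : Type*} [AddCommMonoid M] [AddCommGroup G] [CommRing R] [Module R G] (h : M)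

variable (R) in
lemma funLeft_add_right_pow_apply (f : M → G) (k : ℕ) (y : M) :
    (LinearMap.funLeft R G (· + h) ^ k) f y = f (y + k • h) := by
  induction k generalizing y with
  | zero => simp
  | succ k ih =>
    rw [pow_succ', Module.End.mul_apply, LinearMap.funLeft_apply, ih, succ_nsmul', add_assoc]

variable (R) in
lemma funLeft_add_right_sub_one_pow_apply (f : M → G) (k : ℕ) :
    ((LinearMap.funLeft R G (· + h) - 1) ^ k) f = (Δ_[h])^[k] f := by
  rw [Module.End.pow_apply]
  rfl

-- Both sides expand `(1 - (1 + t) E) ^ N = (-1) ^ N * (t E + Δ) ^ N`, where `E = 1 + Δ` is the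
-- shift by `h`.
lemma sum_neg_one_pow_mul_choose_mul_one_add_pow_smul (f : M → G) (t : R) (N : ℕ) (y : M) :
    ∑ k ∈ range (N + 1), ((-1) ^ k * N.choose k * (1 + t) ^ k) • f (y + k • h) =
      (-1 : R) ^ N • ∑ j ∈ range (N + 1), (N.choose j * t ^ j) • (Δ_[h])^[N - j] f (y + j • h) := by
  let E : Module.End R (M → G) := LinearMap.funLeft R G (· + h)
  have hcomm : Commute (t • E) (E - 1) :=
    ((Commute.refl E).sub_right (Commute.one_right E)).smul_left t
  have hop : (-(1 + t)) • E + 1 = (-1 : R) • (t • E + (E - 1)) := by module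
  have hpow : ((-(1 + t)) • E + 1) ^ N = (-1 : R) ^ N • (t • E + (E - 1)) ^ N := by
    rw [hop, smul_pow]
  rw [(Commute.one_right _).add_pow, hcomm.add_pow] at hpow
  have happly := congr_fun (LinearMap.congr_fun hpow f) y
  simp only [E, smul_pow, one_pow, mul_one, LinearMap.smul_apply, LinearMap.sum_apply,
    Finset.sum_apply, Pi.smul_apply, ← nsmul_eq_mul', funLeft_add_right_pow_apply,
    Module.End.mul_apply, funLeft_add_right_sub_one_pow_apply, smul_mul_assoc,
    neg_pow (1 + t)] at happly
  simpa only [mul_right_comm, mul_smul, mul_comm (Nat.cast _),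
    Nat.cast_smul_eq_nsmul, smul_comm (_ : R) (_ : ℕ)] using happly

-- This is minus the `c`-derivative of the difference formula
-- `Δ^N [Γ(k+A+1) / Γ(k+c+1)] = (A-c)_N Γ(k+A+1) / Γ(k+c+N+1)`.
lemma fwdDiff_iter_factorial_div_factorial_mul_psi (A c N y : ℕ) :
    (Δ_[1])^[N] (fun k => ((k + A).factorial : ℝ) / (k + c).factorial * psi (k + c + 1)) y =
      (y + A).factorial / (y + c + N).factorial *
        ((descPochhammer ℝ N).eval ((A : ℝ) - c) * psi (y + c + N + 1) +
          (descPochhammer ℝ N).derivative.eval ((A : ℝ) - c)) := by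
  induction N generalizing y with
  | zero => simp
  | succ N ih =>
    rw [Function.iterate_succ_apply', fwdDiff, ih, ih, descPochhammer_succ_eval,
      derivative_descPochhammer_succ_eval, show y + 1 + A = y + A + 1 by ring,
      show y + 1 + c + N = y + c + N + 1 by ring, ← add_assoc, Nat.factorial_succ (y + A),
      Nat.factorial_succ (y + c + N), psi_succ (y + c + N).succ_ne_zero]
    push_cast
    field_simp
    ring

end ForwardDifference

section AlternatingPsiSum

/-- The alternating sum `∑ₖ (-1)ᵏ (k + A)! ψ(k + c + 1) / (k! (k + c)! (N - k)!) uᵏ` over `k ≤ N`,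
of which both sums in the derivative formula are instances at `u = (x + 1) / 2`. -/
noncomputable def alternatingPsiSum (A c N : ℕ) (u : ℝ) : ℝ :=
  ∑ k ∈ range (N + 1), (-1 : ℝ) ^ k * (((k + A).factorial : ℝ) * psi (k + c + 1)) /
    ((k.factorial : ℝ) * ((k + c).factorial : ℝ) * ((N - k).factorial : ℝ)) * u ^ k

lemma alternatingPsiSum_one_add (A c N : ℕ) (t : ℝ) :
    alternatingPsiSum A c N (1 + t) =
      (-1) ^ N / (N.factorial * (c + N).factorial) * ∑ j ∈ range (N + 1),
        N.choose j * (j + A).factorial * t ^ j *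
          ((descPochhammer ℝ (N - j)).eval ((A : ℝ) - c) * psi (c + N + 1) +
            (descPochhammer ℝ (N - j)).derivative.eval ((A : ℝ) - c)) := by
  have hexpand := sum_neg_one_pow_mul_choose_mul_one_add_pow_smul 1
    (fun k => ((k + A).factorial : ℝ) / (k + c).factorial * psi (k + c + 1)) t N 0
  simp only [zero_add, smul_eq_mul, mul_one, fwdDiff_iter_factorial_div_factorial_mul_psi]
    at hexpand
  calc
    _ = (N.factorial : ℝ)⁻¹ * ∑ k ∈ range (N + 1), (-1) ^ k * N.choose k * (1 + t) ^ k *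
          (((k + A).factorial : ℝ) / (k + c).factorial * psi (k + c + 1)) := by
      rw [alternatingPsiSum, mul_sum]
      refine Finset.sum_congr rfl fun k hk => ?_
      rw [Nat.cast_choose ℝ (mem_range_succ_iff.1 hk)]
      field_simp
    _ = _ := by
      rw [hexpand]
      simp only [mul_sum]
      refine Finset.sum_congr rfl fun j hj => ?_
      rw [show j + c + (N - j) = c + N by have := mem_range_succ_iff.1 hj; lia]
      field_simp

variable {m n : ℕ} (hmn : m ≤ n) (t : ℝ)
include hmn

lemma alternatingPsiSum_add_one_add_eq_sum_legendreCoeff :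
    (-1) ^ (n + m) * t ^ m * alternatingPsiSum (n + m) m (n - m) (1 + t) =
      ∑ k ∈ range (n + 1), legendreCoeff n k * t ^ k *
        ((descPochhammer ℝ m).eval (k : ℝ) * (2 * psi (n + 1) - psi (k + 1))) := by
  obtain ⟨p, rfl⟩ := Nat.exists_eq_add_of_le hmn
  have hsign : (-1 : ℝ) ^ (m + p + m) * (-1) ^ p = 1 := by
    rw [← pow_add, show m + p + m + p = 2 * (m + p) by ring, pow_mul]
    simp
  rw [Nat.add_sub_cancel_left, alternatingPsiSum_one_add, Nat.cast_add (m + p) m,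
    add_sub_cancel_right, add_assoc m p 1, Finset.sum_range_add _ m (p + 1),
    Finset.sum_eq_zero (s := range m), zero_add, ← add_assoc]
  · simp only [mul_sum]
    refine Finset.sum_congr rfl fun j hj => ?_
    have hjp : j ≤ p := mem_range_succ_iff.1 hj
    have hcoeff := legendreCoeff_mul_descPochhammer_eval (m.le_add_right j)
      (Nat.add_le_add_left hjp m)
    have hderiv := derivative_descPochhammer_eval_natCast_of_le
      (show p - j ≤ m + p from (p.sub_le j).trans (p.le_add_left m))
    rw [show m + p - (p - j) = m + j by lia] at hderiv
    simp only [Nat.add_sub_cancel_left, show m + p - (m + j) = p - j by lia] at hcoeff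
    rw [show j + (m + p + m) = m + p + (m + j) by ring, hderiv, pow_add t]
    calc
      _ = (-1) ^ (m + p + m) * (-1) ^ p / (p.factorial * (m + p).factorial) * (t ^ m * t ^ j) *
            (p.choose j * (m + p + (m + j)).factorial *
              (descPochhammer ℝ (p - j)).eval ((m + p : ℕ) : ℝ)) *
            (2 * psi (m + p + 1) - psi (m + j + 1)) := by ring
      _ = _ := by
        rw [hsign, ← hcoeff]
        field_simp
  · intro k hk
    rw [descPochhammer_eval_coe_nat_of_lt (mem_range.1 hk)]
    ring

lemma alternatingPsiSum_self_one_add_eq_sum_legendreCoeff :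
    (-1) ^ n * ((n + m).factorial : ℝ) / (n - m).factorial *
        alternatingPsiSum n m n (1 + t) =
      ∑ k ∈ range (n + 1), legendreCoeff n k * t ^ k * ((descPochhammer ℝ m).eval (k : ℝ) *
        (psi (n + m + 1) + psi (n - m + 1) - psi (k + 1)) +
          (descPochhammer ℝ m).derivative.eval (k : ℝ)) := by
  have hsign : ((-1 : ℝ) ^ n) ^ 2 = 1 := by rw [← pow_mul', pow_mul, neg_one_sq, one_pow]
  rw [alternatingPsiSum_one_add, ← Nat.cast_sub hmn, mul_sum, mul_sum]
  refine Finset.sum_congr rfl fun k hk => ?_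
  have hkn : k ≤ n := mem_range_succ_iff.1 hk
  calc
    _ = legendreCoeff n k * t ^ k / (n - m).factorial * (k.factorial *
          (descPochhammer ℝ (n - k)).eval ((n - m : ℕ) : ℝ) * psi (n + m + 1) + k.factorial *
          (descPochhammer ℝ (n - k)).derivative.eval ((n - m : ℕ) : ℝ)) := by
      rw [add_comm k n, add_comm m n, ← legendreCoeff_mul_factorial hkn]
      field_simp
      rw [hsign, one_mul]
    _ = _ := by
      rw [factorial_mul_descPochhammer_eval_sub hmn hkn,
        factorial_mul_derivative_descPochhammer_eval_sub hmn hkn]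
      field_simp
      ring

lemma sum_legendreCoeff_mul_add_derivative_eq_alternatingPsiSum (L : ℝ) :
    ∑ k ∈ range (n + 1), legendreCoeff n k * t ^ k *
        ((descPochhammer ℝ m).eval (k : ℝ) * L + (descPochhammer ℝ m).derivative.eval (k : ℝ)) =
      (L - (psi (n + m + 1) - 2 * psi (n + 1) + psi (n - m + 1))) *
          ∑ k ∈ range (n + 1), legendreCoeff n k * t ^ k * (descPochhammer ℝ m).eval (k : ℝ) -
        (-1) ^ (n + m) * t ^ m * alternatingPsiSum (n + m) m (n - m) (1 + t) +
        (-1) ^ n * ((n + m).factorial : ℝ) / (n - m).factorial *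
          alternatingPsiSum n m n (1 + t) := by
  rw [alternatingPsiSum_add_one_add_eq_sum_legendreCoeff hmn,
    alternatingPsiSum_self_one_add_eq_sum_legendreCoeff hmn, mul_sum, ← sum_sub_distrib,
    ← sum_add_distrib]
  exact sum_congr rfl fun k _ => by ring

end AlternatingPsiSum

theorem stmt_3 (m n : ℕ) (hmn : m ≤ n) (x : ℝ) (hx : 1 < x) :
    iteratedDeriv m (fun y => legendreP n y * Real.log (y - 1)) x =
      iteratedDeriv m (legendreP n) x * Real.log (x - 1)
      - (psi (n + m + 1) - 2 * psi (n + 1) + psi (n - m + 1)) *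
          iteratedDeriv m (legendreP n) x
      - (-1 : ℝ) ^ (n + m) * (2 : ℝ) ^ (-(m : ℤ)) *
          ∑ k ∈ Finset.range (n - m + 1),
            (-1 : ℝ) ^ k * (((k + n + m).factorial : ℝ) * psi (k + m + 1)) /
                ((k.factorial : ℝ) * ((k + m).factorial : ℝ) * ((n - m - k).factorial : ℝ)) *
              ((x + 1) / 2) ^ k
      + (-1 : ℝ) ^ n * ((n + m).factorial : ℝ) / ((n - m).factorial : ℝ) *
            (x - 1) ^ (-(m : ℤ)) *
          ∑ k ∈ Finset.range (n + 1),
            (-1 : ℝ) ^ k * (((k + n).factorial : ℝ) * psi (k + m + 1)) /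
                ((k.factorial : ℝ) * ((k + m).factorial : ℝ) * ((n - k).factorial : ℝ)) *
              ((x + 1) / 2) ^ k := by
  have hx₀ : x - 1 ≠ 0 := (sub_pos.2 hx).ne'
  have htwo : (2 : ℝ) ^ (-(m : ℤ)) = (x - 1) ^ (-(m : ℤ)) * ((x - 1) / 2) ^ m := by
    rw [zpow_neg, zpow_neg, zpow_natCast, zpow_natCast, div_pow]
    field_simp
  have hu : (x + 1) / 2 = 1 + (x - 1) / 2 := by ring
  rw [iteratedDeriv_legendreP_mul_log n m hx, iteratedDeriv_legendreP n m hx.ne', hu, htwo,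
    sum_legendreCoeff_mul_add_derivative_eq_alternatingPsiSum hmn]
  simp only [alternatingPsiSum, ← add_assoc]
  ring
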